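/- Let k be a field and x, y ∈ O nonzero split octonions with Q(x) = Q(y) = 0. Then x*y = 0 if and only if dim_k(L(x) ∩ R(y)) = 3. -/

import Mathlib

/-!
Write `x̄` for the conjugate and `⟨·,·⟩` for the polar form of `Q`, which is nondegenerate.
From `x̄ (x a) = Q(x) a`, `(a x) x̄ = Q(x) a` and the polarizations of `x (x̄ a) = Q(x) a` and
`(a x̄) x = Q(x) a` one gets, for `x` and `y` nonzero of norm `0`, `L(x) = ker (w ↦ x̄ w)` and
`R(y) = ker (w ↦ w ȳ)` (`mem_Lsub_iff`, `mem_Rsub_iff`). As `⟨x a, w⟩ = ⟨a, x̄ w⟩`, it follows that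
`L(x)` is its own orthogonal complement, hence has dimension `4` (`finrank_Lsub`).

Everything else rests on the identity `(x a) ȳ + (x y) ā = ⟨a, y⟩ x` (`omul_omul_oconj_polar`).

* If `x y = 0`, the map `w ↦ w ȳ` sends `x a ∈ L(x)` to `⟨a, y⟩ x`, so on the four-dimensional space
  `L(x)` it has the line `k x` as its range and `L(x) ∩ R(y)` as its kernel: the dimension is `3`
  (`finrank_inf_of_omul_eq_zero`).
* If `x y ≠ 0`, let `w ∈ L(x) ∩ R(y)`. Among the `a` with `w = x a` there is one with `⟨a, y⟩ ≠ 0`: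
  adding `x̄ b` to `a` does not change `x a`, and changes `⟨a, y⟩` by `⟨b, x y⟩`. The identity
  becomes `(x y) ā = ⟨a, y⟩ x`, and multiplying by `a` on the right gives
  `Q(a) (x y) = ⟨a, y⟩ w`. Thus `L(x) ∩ R(y)` lies on the line `k (x y)`
  (`inf_le_span_of_omul_ne_zero`).
-/


open Matrix

/-- 2×2 matrices over `R`. -/
abbrev M2 (R : Type*) := Matrix (Fin 2) (Fin 2) R

/-- The split octonions over `R`: pairs of 2×2 matrices. -/
abbrev Oct (R : Type*) := M2 R × M2 R

variable {R : Type*} [CommRing R]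

/-- Octonion multiplication (Cayley–Dickson on 2×2 matrices). -/
def omul (x y : Oct R) : Oct R :=
  (x.1 * y.1 - y.2.adjugate * x.2, x.2 * y.1.adjugate + y.2 * x.1)

/-- Octonion conjugation. -/
def oconj (x : Oct R) : Oct R := (x.1.adjugate, -x.2)

/-- The norm of a split octonion. -/
def oQ (x : Oct R) : R := x.1.det + x.2.det

/-- The associated bilinear form. -/
def obil (x y : Oct R) : R := oQ (x + y) - oQ x - oQ y

lemma adj_add (A B : M2 R) : (A + B).adjugate = A.adjugate + B.adjugate := by
  ext i j
  fin_cases i <;> fin_cases j <;>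
    simp [Matrix.adjugate_fin_two] <;> ring

lemma adj_smul (c : R) (A : M2 R) : (c • A).adjugate = c • A.adjugate := by
  rw [Matrix.adjugate_smul]
  norm_num

/-- Left multiplication by `z` as a linear map. -/
def Lmap (z : Oct R) : Oct R →ₗ[R] Oct R where
  toFun w := omul z w
  map_add' a b := by
    simp only [omul, Prod.fst_add, Prod.snd_add, adj_add, Prod.mk_add_mk]
    rw [Prod.ext_iff]
    constructor <;> dsimp only <;> noncomm_ring
  map_smul' c a := by
    simp only [omul, Prod.smul_fst, Prod.smul_snd, adj_smul, RingHom.id_apply, Prod.smul_mk]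
    rw [Prod.ext_iff]
    constructor <;> dsimp only <;>
      simp [Matrix.mul_smul, Matrix.smul_mul, smul_sub]

/-- Right multiplication by `z` as a linear map. -/
def Rmap (z : Oct R) : Oct R →ₗ[R] Oct R where
  toFun w := omul w z
  map_add' a b := by
    simp only [omul, Prod.fst_add, Prod.snd_add, Prod.mk_add_mk]
    rw [Prod.ext_iff]
    constructor <;> dsimp only <;> noncomm_ring
  map_smul' c a := by
    simp only [omul, Prod.smul_fst, Prod.smul_snd, RingHom.id_apply, Prod.smul_mk]
    rw [Prod.ext_iff]
    constructor <;> dsimp only <;>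
      simp [Matrix.mul_smul, Matrix.smul_mul, smul_sub]

/-- `L(z)`: the range of left multiplication by `z`. -/
def Lsub (z : Oct R) : Submodule R (Oct R) := LinearMap.range (Lmap z)

/-- `R(z)`: the range of right multiplication by `z`. -/
def Rsub (z : Oct R) : Submodule R (Oct R) := LinearMap.range (Rmap z)

section Identities

lemma obil_eq (x y : Oct R) : obil x y =
    x.1 0 0 * y.1 1 1 + y.1 0 0 * x.1 1 1 - x.1 0 1 * y.1 1 0 - y.1 0 1 * x.1 1 0 +
    (x.2 0 0 * y.2 1 1 + y.2 0 0 * x.2 1 1 - x.2 0 1 * y.2 1 0 - y.2 0 1 * x.2 1 0) := by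
  simp [obil, oQ, Matrix.det_fin_two]; ring

lemma oct_ext {S : Type*} {x y : Oct S} (h1 : ∀ i j, x.1 i j = y.1 i j) (h2 : ∀ i j, x.2 i j = y.2 i j) :
    x = y := Prod.ext (Matrix.ext h1) (Matrix.ext h2)

/-- The polarization of `x (x̄ a) = Q(x) a`. -/
lemma omul_polar_left (x b a : Oct R) :
    omul x (omul (oconj b) a) + omul b (omul (oconj x) a) = obil x b • a := by
  rw [obil_eq]
  apply oct_ext <;> intro i j <;> fin_cases i <;> fin_cases j <;>
    simp [omul, oconj, Matrix.adjugate_fin_two, Matrix.mul_apply, Matrix.vecMul, dotProduct,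
      Fin.sum_univ_two] <;> ring

/-- The polarization of `(a ȳ) y = Q(y) a`. -/
lemma omul_polar_right (a y b : Oct R) :
    omul (omul a (oconj y)) b + omul (omul a (oconj b)) y = obil y b • a := by
  rw [obil_eq]
  apply oct_ext <;> intro i j <;> fin_cases i <;> fin_cases j <;>
    simp [omul, oconj, Matrix.adjugate_fin_two, Matrix.mul_apply, Matrix.vecMul, dotProduct,
      Fin.sum_univ_two] <;> ring

lemma oconj_oconj (x : Oct R) : oconj (oconj x) = x := by
  apply oct_ext <;> intro i j <;> fin_cases i <;> fin_cases j <;>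
    simp [oconj, Matrix.adjugate_fin_two]

lemma oconj_omul_omul (x a : Oct R) : omul (oconj x) (omul x a) = oQ x • a := by
  apply oct_ext <;> intro i j <;> fin_cases i <;> fin_cases j <;>
    simp [omul, oconj, oQ, Matrix.adjugate_fin_two, Matrix.mul_apply, Matrix.vecMul, dotProduct,
      Fin.sum_univ_two,
      Matrix.det_fin_two] <;> ring

lemma omul_oconj_omul (x a : Oct R) : omul x (omul (oconj x) a) = oQ x • a := by
  apply oct_ext <;> intro i j <;> fin_cases i <;> fin_cases j <;>
    simp [omul, oconj, oQ, Matrix.adjugate_fin_two, Matrix.mul_apply, Matrix.vecMul, dotProduct,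
      Fin.sum_univ_two,
      Matrix.det_fin_two] <;> ring

lemma omul_omul_oconj (a x : Oct R) : omul (omul a x) (oconj x) = oQ x • a := by
  apply oct_ext <;> intro i j <;> fin_cases i <;> fin_cases j <;>
    simp [omul, oconj, oQ, Matrix.adjugate_fin_two, Matrix.mul_apply, Matrix.vecMul, dotProduct,
      Fin.sum_univ_two,
      Matrix.det_fin_two] <;> ring

lemma omul_oconj_omul_right (a x : Oct R) : omul (omul a (oconj x)) x = oQ x • a := by
  apply oct_ext <;> intro i j <;> fin_cases i <;> fin_cases j <;>
    simp [omul, oconj, oQ, Matrix.adjugate_fin_two, Matrix.mul_apply, Matrix.vecMul, dotProduct,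
      Fin.sum_univ_two,
      Matrix.det_fin_two] <;> ring

/-- The polarization of `(x a) ā = Q(a) x`. -/
lemma omul_omul_oconj_polar (x a y : Oct R) :
    omul (omul x a) (oconj y) + omul (omul x y) (oconj a) = obil a y • x := by
  rw [obil_eq]
  apply oct_ext <;> intro i j <;> fin_cases i <;> fin_cases j <;>
    simp [omul, oconj, Matrix.adjugate_fin_two, Matrix.mul_apply, Matrix.vecMul, dotProduct,
      Fin.sum_univ_two] <;> ring

/-- Left multiplication by `x̄` is the adjoint of left multiplication by `x`. -/
lemma obil_omul_left (x a b : Oct R) : obil (omul x a) b = obil a (omul (oconj x) b) := by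
  simp [obil_eq, omul, oconj, Matrix.adjugate_fin_two, Matrix.mul_apply, Matrix.vecMul, dotProduct,
      Fin.sum_univ_two]; ring

/-- The polar form of the norm, as a bundled bilinear form. -/
def oB (R : Type*) [CommRing R] : LinearMap.BilinForm R (Oct R) :=
  LinearMap.mk₂ R obil
    (fun _ _ _ => by simp only [obil_eq, Prod.fst_add, Prod.snd_add, Matrix.add_apply]; ring)
    (fun _ _ _ => by
      simp only [obil_eq, Prod.smul_fst, Prod.smul_snd, Matrix.smul_apply, smul_eq_mul]; ring)
    (fun _ _ _ => by simp only [obil_eq, Prod.fst_add, Prod.snd_add, Matrix.add_apply]; ring)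
    (fun _ _ _ => by
      simp only [obil_eq, Prod.smul_fst, Prod.smul_snd, Matrix.smul_apply, smul_eq_mul]; ring)

lemma oB_apply (x y : Oct R) : oB R x y = obil x y := rfl

lemma obil_comm (x y : Oct R) : obil x y = obil y x := by
  simp only [obil_eq]; ring

lemma eq_zero_of_obil (x : Oct R) (h : ∀ b, obil x b = 0) : x = 0 := by
  -- Pairing with the matrix units reads off the entries of `x`, up to sign.
  have h1 := h (!![1, 0; 0, 0], 0)
  have h2 := h (!![0, 1; 0, 0], 0)
  have h3 := h (!![0, 0; 1, 0], 0)
  have h4 := h (!![0, 0; 0, 1], 0)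
  have h5 := h (0, !![1, 0; 0, 0])
  have h6 := h (0, !![0, 1; 0, 0])
  have h7 := h (0, !![0, 0; 1, 0])
  have h8 := h (0, !![0, 0; 0, 1])
  simp [obil_eq] at h1 h2 h3 h4 h5 h6 h7 h8
  apply oct_ext <;> intro i j <;> fin_cases i <;> fin_cases j <;> simp [*]

lemma exists_obil_ne_zero {x : Oct R} (hx : x ≠ 0) : ∃ b, obil x b ≠ 0 := by
  by_contra! h
  exact hx (eq_zero_of_obil x h)

lemma oB_nondegenerate : (oB R).Nondegenerate :=
  ⟨fun x h => eq_zero_of_obil x h,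
    fun x h => eq_zero_of_obil x fun b => (obil_comm x b).trans (h b)⟩

end Identities

section Field

variable {k : Type*} [Field k]

lemma Lmap_apply (x w : Oct k) : Lmap x w = omul x w := rfl

lemma Rmap_apply (x w : Oct k) : Rmap x w = omul w x := rfl

lemma omul_zero_right (x : Oct k) : omul x 0 = 0 := map_zero (Lmap x)

lemma omul_zero_left (x : Oct k) : omul 0 x = 0 := map_zero (Rmap x)

lemma mem_Lsub_iff {x : Oct k} (hx : x ≠ 0) (hq : oQ x = 0) (w : Oct k) :
    w ∈ Lsub x ↔ omul (oconj x) w = 0 := by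
  constructor
  · rintro ⟨a, rfl⟩
    rw [Lmap_apply, oconj_omul_omul, hq, zero_smul]
  · intro h
    obtain ⟨b, hb⟩ := exists_obil_ne_zero hx
    have key := omul_polar_left x b w
    rw [h, omul_zero_right, add_zero] at key
    rw [← Submodule.smul_mem_iff _ hb, ← key]
    exact ⟨_, rfl⟩

lemma mem_Rsub_iff {y : Oct k} (hy : y ≠ 0) (hq : oQ y = 0) (w : Oct k) :
    w ∈ Rsub y ↔ omul w (oconj y) = 0 := by
  constructor
  · rintro ⟨a, rfl⟩
    rw [Rmap_apply, omul_omul_oconj, hq, zero_smul]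
  · intro h
    obtain ⟨b, hb⟩ := exists_obil_ne_zero hy
    have key := omul_polar_right w y b
    rw [h, omul_zero_left, zero_add] at key
    rw [← Submodule.smul_mem_iff _ hb, ← key]
    exact ⟨_, rfl⟩

/-- `L(x)` is Lagrangian: `w ⊥ L(x)` means `x̄ w ⊥ O`, that is `x̄ w = 0`. -/
lemma orthogonal_Lsub {x : Oct k} (hx : x ≠ 0) (hq : oQ x = 0) :
    (oB k).orthogonal (Lsub x) = Lsub x := by
  ext w
  rw [mem_Lsub_iff hx hq, LinearMap.BilinForm.mem_orthogonal_iff]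
  constructor
  · intro h
    apply eq_zero_of_obil
    intro b
    rw [obil_comm, ← obil_omul_left]
    exact h _ ⟨b, rfl⟩
  · rintro h _ ⟨a, rfl⟩
    change obil (omul x a) w = 0
    rw [obil_omul_left, h, ← oB_apply, map_zero]

lemma finrank_Lsub {x : Oct k} (hx : x ≠ 0) (hq : oQ x = 0) :
    Module.finrank k (Lsub x) = 4 := by
  have h := LinearMap.BilinForm.finrank_orthogonal (oB_nondegenerate (R := k)) (Lsub x)
  have h8 : Module.finrank k (Oct k) = 8 := by
    simp [Module.finrank_prod, Module.finrank_matrix]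
  have hle := Submodule.finrank_le (Lsub x)
  rw [orthogonal_Lsub hx hq] at h
  omega

lemma finrank_inf_of_omul_eq_zero {x y : Oct k} (hx : x ≠ 0) (hy : y ≠ 0)
    (hqx : oQ x = 0) (hqy : oQ y = 0) (hxy : omul x y = 0) :
    Module.finrank k ↥(Lsub x ⊓ Rsub y) = 3 := by
  have key (a : Oct k) : omul (omul x a) (oconj y) = obil a y • x := by
    have h := omul_omul_oconj_polar x a y
    rwa [hxy, omul_zero_left, add_zero] at h
  have hrange : LinearMap.range ((Rmap (oconj y)).domRestrict (Lsub x)) = k ∙ x := by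
    apply le_antisymm
    · rintro _ ⟨⟨_, a, rfl⟩, rfl⟩
      exact Submodule.mem_span_singleton.2 ⟨obil a y, (key a).symm⟩
    · rw [Submodule.span_singleton_le_iff_mem]
      obtain ⟨b, hb⟩ := exists_obil_ne_zero hy
      rw [obil_comm] at hb
      rw [← Submodule.smul_mem_iff _ hb, ← key b]
      exact ⟨⟨omul x b, b, rfl⟩, rfl⟩
  have hker : (LinearMap.ker ((Rmap (oconj y)).domRestrict (Lsub x))).map (Lsub x).subtype
      = Lsub x ⊓ Rsub y := by
    rw [LinearMap.ker_domRestrict, Submodule.map_comap_subtype]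
    congr 1
    ext w
    rw [mem_Rsub_iff hy hqy, LinearMap.mem_ker, Rmap_apply]
  have h := LinearMap.finrank_range_add_finrank_ker ((Rmap (oconj y)).domRestrict (Lsub x))
  rw [hrange, finrank_span_singleton hx, finrank_Lsub hx hqx, ← Submodule.finrank_map_subtype_eq,
    hker] at h
  omega

lemma inf_le_span_of_omul_ne_zero {x y : Oct k} (hy : y ≠ 0)
    (hqx : oQ x = 0) (hqy : oQ y = 0) (hxy : omul x y ≠ 0) :
    Lsub x ⊓ Rsub y ≤ k ∙ omul x y := by
  rintro w ⟨⟨a₀, ha₀⟩, hw⟩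
  obtain ⟨a, ha, hay⟩ : ∃ a, omul x a = w ∧ obil a y ≠ 0 := by
    -- If `⟨a₀, y⟩ = 0`, correct `a₀` by an element of `ker (w ↦ x w)`.
    by_cases h0 : obil a₀ y = 0
    · obtain ⟨b, hb⟩ := exists_obil_ne_zero hxy
      refine ⟨a₀ + omul (oconj x) b, ?_, ?_⟩
      · rw [← Lmap_apply, map_add, ha₀, Lmap_apply, omul_oconj_omul, hqx, zero_smul, add_zero]
      · rw [← oB_apply, map_add, LinearMap.add_apply, oB_apply, oB_apply, h0, zero_add,
          obil_omul_left, oconj_oconj, obil_comm]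
        exact hb
    · exact ⟨a₀, ha₀, h0⟩
  have key := omul_omul_oconj_polar x a y
  rw [ha, (mem_Rsub_iff hy hqy w).1 hw, zero_add] at key
  have h := omul_oconj_omul_right (omul x y) a
  rw [key, ← Rmap_apply, map_smul, Rmap_apply, ha] at h
  rw [← Submodule.smul_mem_iff _ hay, h]
  exact Submodule.smul_mem _ _ (Submodule.mem_span_singleton_self _)

end Field

theorem stmt4 (k : Type*) [Field k] (x y : Oct k) (hx : x ≠ 0) (hy : y ≠ 0)
    (hqx : oQ x = 0) (hqy : oQ y = 0) :
    omul x y = 0 ↔ Module.finrank k ↥(Lsub x ⊓ Rsub y) = 3 := by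
  refine ⟨finrank_inf_of_omul_eq_zero hx hy hqx hqy, fun h => ?_⟩
  by_contra hxy
  have hle := Submodule.finrank_mono (inf_le_span_of_omul_ne_zero hy hqx hqy hxy)
  rw [finrank_span_singleton hxy, h] at hle
  omega
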